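/- Fix positive naturals N, T and index the coordinates of ℝ^{NT} by pairs (i,t) with i ∈ {1,…,N}, t ∈ {1,…,T} (coordinate (t−1)N+i in column-stacked order). Let 𝕂 be a real symmetric positive definite NT×NT matrix, m ∈ ℝ^{NT}, and let 𝚺 be the diagonal NT×NT matrix whose ((t−1)N+i)-entry is σ_t² with σ_t > 0. For each (i,t), let β_t > 0 and let γ_{i,t} : ℝ^{T} → ℝ and c_{i,t} : ℝ^{T} → ℝ be functions of the observation vector at input i that do not depend on its t-th coordinate, with |γ_{i,t}| ≤ Γ for some Γ < ∞ and 0 < c_min ≤ |c_{i,t}| ≤ c_max < ∞. Given an observation matrix Y ∈ ℝ^{N×T} with vectorisation y(Y) ∈ ℝ^{NT}, define the weights w_{i,t}(Y) = β_t·(1 + ((Y_{i,t} − γ_{i,t}(Y_i))/c_{i,t}(Y_i))²)^{−1/2}, the diagonal matrix J(Y) with ((t−1)N+i)-entry σ_t²/(2·w_{i,t}(Y)²), and the shifted mean m_W(Y) ∈ ℝ^{NT} with ((t−1)N+i)-entry m_{(t−1)N+i} + σ_t²·(−2(Y_{i,t} − γ_{i,t}(Y_i))/(c_{i,t}(Y_i)²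 + (Y_{i,t} − γ_{i,t}(Y_i))²)). The MO-RCGP posterior given Y is the multivariate Gaussian on ℝ^{NT} with mean μ(Y) = m + 𝕂(𝕂 + 𝚺J(Y))⁻¹(y(Y) − m_W(Y)) and covariance S(Y) = 𝕂(𝕂 + 𝚺J(Y))⁻¹𝚺J(Y), which is symmetric positive definite, and the channel-t marginal posterior is the multivariate Gaussian on ℝᴺ whose mean is the channel-t subvector of μ(Y) and whose covariance is the channel-t diagonal N×N sub-block of S(Y) (also symmetric positive definite). For m₀ ∈ {1,…,N}, s ∈ {1,…,T} and yᶜ ∈ ℝ, let Yᶜ denote Y with its (m₀,s) entry replaced by yᶜ. Then there exists a constant C ∈ ℝ, independent of yᶜ, such that for every t ∈ {1,…,T} and every yᶜ ∈ ℝ, klDiv( channel-t marginal posterior given Y, channel-t marginal posterior given Yᶜ ) ≤ ENNReal.ofReal C. (This is the robustness of MO-RCGP: the posterior influence function of an arbitrarily large contamination in any one channel is uniformly bounded across all channels.) -/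

import Mathlib

open Matrix MeasureTheory

open Classical in
/-- The Kullback–Leibler divergence `∫ log(dμ/dν) dμ` when `μ ≪ ν` with integrable
log-density, and `∞` otherwise. -/
noncomputable def klDiv {α : Type*} [MeasurableSpace α] (μ ν : Measure α) : ENNReal :=
  if μ ≪ ν ∧ Integrable (MeasureTheory.llr μ ν) μ then
    ENNReal.ofReal (∫ x, MeasureTheory.llr μ ν x ∂μ)
  else ⊤

/-- The multivariate Gaussian measure `N(μ, Σ)` on `ℝᴺ`, given by its density with
respect to Lebesgue measure. -/
noncomputable def multivariateGaussian {N : ℕ} (μv : Fin N → ℝ)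
    (S : Matrix (Fin N) (Fin N) ℝ) : Measure (Fin N → ℝ) :=
  volume.withDensity fun x =>
    ENNReal.ofReal ((Real.sqrt ((2 * Real.pi) ^ N * S.det))⁻¹ *
      Real.exp (-(1 / 2 : ℝ) * ((x - μv) ⬝ᵥ (S⁻¹ *ᵥ (x - μv)))))

section MORCGP

variable {N T : ℕ}

/-- The inverse multi-quadratic weight `w_{i,t}(Y)` of the MO-RCGP. -/
noncomputable def imqWeight (β : Fin T → ℝ) (γ c : Fin N → Fin T → (Fin T → ℝ) → ℝ)
    (Y : Fin N → Fin T → ℝ) (i : Fin N) (t : Fin T) : ℝ :=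
  β t * (Real.sqrt (1 + ((Y i t - γ i t (Y i)) / c i t (Y i)) ^ 2))⁻¹

/-- The diagonal noise matrix `𝚺` with entries `σ_t²`, coordinates indexed by
pairs `(i, t)`. -/
noncomputable def noiseMat (σ : Fin T → ℝ) :
    Matrix (Fin N × Fin T) (Fin N × Fin T) ℝ :=
  Matrix.diagonal fun p => (σ p.2) ^ 2

/-- The diagonal matrix `J(Y)` with entries `σ_t² / (2 w_{i,t}(Y)²)`. -/
noncomputable def Jmat (σ β : Fin T → ℝ) (γ c : Fin N → Fin T → (Fin T → ℝ) → ℝ)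
    (Y : Fin N → Fin T → ℝ) : Matrix (Fin N × Fin T) (Fin N × Fin T) ℝ :=
  Matrix.diagonal fun p => (σ p.2) ^ 2 / (2 * (imqWeight β γ c Y p.1 p.2) ^ 2)

/-- The shifted mean `m_W(Y)` of the MO-RCGP. -/
noncomputable def shiftedMean (m : Fin N × Fin T → ℝ) (σ : Fin T → ℝ)
    (γ c : Fin N → Fin T → (Fin T → ℝ) → ℝ) (Y : Fin N → Fin T → ℝ) :
    Fin N × Fin T → ℝ := fun p =>
  m p + (σ p.2) ^ 2 *
    (-2 * (Y p.1 p.2 - γ p.1 p.2 (Y p.1)) /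
      ((c p.1 p.2 (Y p.1)) ^ 2 + (Y p.1 p.2 - γ p.1 p.2 (Y p.1)) ^ 2))

/-- The MO-RCGP posterior mean `μ(Y) = m + 𝕂 (𝕂 + 𝚺J(Y))⁻¹ (y(Y) − m_W(Y))`. -/
noncomputable def postMean (𝕂 : Matrix (Fin N × Fin T) (Fin N × Fin T) ℝ)
    (m : Fin N × Fin T → ℝ) (σ β : Fin T → ℝ)
    (γ c : Fin N → Fin T → (Fin T → ℝ) → ℝ) (Y : Fin N → Fin T → ℝ) :
    Fin N × Fin T → ℝ :=
  m + (𝕂 * (𝕂 + noiseMat σ * Jmat σ β γ c Y)⁻¹) *ᵥ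
    fun p => Y p.1 p.2 - shiftedMean m σ γ c Y p

/-- The MO-RCGP posterior covariance `S(Y) = 𝕂 (𝕂 + 𝚺J(Y))⁻¹ 𝚺J(Y)`. -/
noncomputable def postCov (𝕂 : Matrix (Fin N × Fin T) (Fin N × Fin T) ℝ)
    (σ β : Fin T → ℝ) (γ c : Fin N → Fin T → (Fin T → ℝ) → ℝ)
    (Y : Fin N → Fin T → ℝ) : Matrix (Fin N × Fin T) (Fin N × Fin T) ℝ :=
  𝕂 * (𝕂 + noiseMat σ * Jmat σ β γ c Y)⁻¹ * (noiseMat σ * Jmat σ β γ c Y)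

/-- The mean of the channel-`t` marginal posterior. -/
noncomputable def margMean (𝕂 : Matrix (Fin N × Fin T) (Fin N × Fin T) ℝ)
    (m : Fin N × Fin T → ℝ) (σ β : Fin T → ℝ)
    (γ c : Fin N → Fin T → (Fin T → ℝ) → ℝ) (Y : Fin N → Fin T → ℝ) (t : Fin T) :
    Fin N → ℝ := fun i => postMean 𝕂 m σ β γ c Y (i, t)

/-- The covariance of the channel-`t` marginal posterior: the channel-`t` diagonal
`N × N` sub-block of `S(Y)`. -/
noncomputable def margCov (𝕂 : Matrix (Fin N × Fin T) (Fin N × Fin T) ℝ)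
    (σ β : Fin T → ℝ) (γ c : Fin N → Fin T → (Fin T → ℝ) → ℝ)
    (Y : Fin N → Fin T → ℝ) (t : Fin T) : Matrix (Fin N) (Fin N) ℝ :=
  Matrix.of fun i i' => postCov 𝕂 σ β γ c Y (i, t) (i', t)

end MORCGP

open ProbabilityTheory (gaussianReal gaussianPDFReal IsGaussian)
open Set WithLp
open scoped ENNReal MatrixOrder ProbabilityTheory

/-! The posterior depends on `Y` only through the noise precisions `e = (𝚺J(Y))⁻¹` and the
information vector `v = (𝚺J(Y))⁻¹(y(Y) − m_W(Y))`: its covariance is `(𝕂⁻¹ + diag e)⁻¹` and its mean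
is `m + (𝕂⁻¹ + diag e)⁻¹ v`. Since the squared IMQ weight decays like `Y_{i,t}⁻²`, both `e` and `v`
stay in a compact box, whatever `Y` is. On that box the moments are continuous and the covariances
positive definite (an observation with precision `e = 0` is simply ignored), so the channel moments
range over a compact set of nondegenerate Gaussian parameters, on which the closed form of the
Gaussian Kullback–Leibler divergence is continuous, hence bounded. -/

section Matrix

variable {ι : Type*} [Fintype ι] [DecidableEq ι]

lemma continuousOn_matrix_inv :
    ContinuousOn (fun M : Matrix ι ι ℝ ↦ M⁻¹) {M | M.det ≠ 0} := fun M hM ↦ by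
  refine (continuousAt_matrix_inv M ?_).continuousWithinAt
  rw [Ring.inverse_eq_inv']
  exact continuousAt_inv₀ hM

lemma mul_inv_add_mul_eq_inv_add_inv {A B : Matrix ι ι ℝ} (hA : IsUnit A) (hB : IsUnit B) :
    A * (A + B)⁻¹ * B = (A⁻¹ + B⁻¹)⁻¹ := by
  rw [add_comm A, add_comm A⁻¹, Matrix.inv_add_inv (iff_of_true hB hA), Matrix.mul_inv_rev,
    Matrix.mul_inv_rev, nonsing_inv_nonsing_inv _ ((isUnit_iff_isUnit_det A).1 hA),
    nonsing_inv_nonsing_inv _ ((isUnit_iff_isUnit_det B).1 hB), mul_assoc]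

lemma posDef_inv_add_diagonal_inv {K : Matrix ι ι ℝ} (hK : K.PosDef) {e : ι → ℝ} (he : 0 ≤ e) :
    (K⁻¹ + diagonal e)⁻¹.PosDef :=
  (hK.inv.add_posSemidef (.diagonal he)).inv

lemma continuousOn_inv_add_diagonal_inv {K : Matrix ι ι ℝ} (hK : K.PosDef) :
    ContinuousOn (fun e : ι → ℝ ↦ (K⁻¹ + diagonal e)⁻¹) (Ici 0) :=
  continuousOn_matrix_inv.comp (by fun_prop) fun _ he ↦
    (hK.inv.add_posSemidef (.diagonal he)).det_pos.ne'

end Matrix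

section Measure

variable {α : Type*} {mα : MeasurableSpace α} {ν : Measure α}

lemma map_withDensity_comp {α' : Type*} {mα' : MeasurableSpace α'} {φ : α → α'}
    (hφ : Measurable φ) {g : α' → ℝ≥0∞} (hg : Measurable g) :
    (ν.withDensity (g ∘ φ)).map φ = (ν.map φ).withDensity g := by
  ext s hs
  rw [Measure.map_apply hφ hs, withDensity_apply _ (hφ hs), withDensity_apply _ hs,
    setLIntegral_map hs hg hφ]
  rfl

lemma volume_map_const_add_mulVec {ι : Type*} [Fintype ι] [DecidableEq ι] (b : ι → ℝ)
    {A : Matrix ι ι ℝ} (hA : A.det ≠ 0) :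
    (volume : Measure (ι → ℝ)).map (fun x ↦ b + A *ᵥ x) = ENNReal.ofReal |A.det|⁻¹ • volume := by
  have hcomp : (fun x ↦ b + A *ᵥ x) = (b + ·) ∘ toLin' A := by
    ext x
    simp
  rw [hcomp, ← Measure.map_map (by fun_prop) (toLin' A).continuous_of_finiteDimensional.measurable,
    Real.map_matrix_volume_pi_eq_smul_volume_pi hA, Measure.map_smul, map_add_left_eq_self, abs_inv]

lemma pi_withDensity_ofReal {ι : Type*} [Fintype ι] {X : ι → Type*}
    {mX : ∀ i, MeasurableSpace (X i)} {μ : ∀ i, Measure (X i)} [∀ i, SigmaFinite (μ i)]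
    {f : ∀ i, X i → ℝ} (hf : ∀ i, Integrable (f i) (μ i)) (hf₀ : ∀ i x, 0 ≤ f i x) :
    Measure.pi (fun i ↦ (μ i).withDensity fun x ↦ ENNReal.ofReal (f i x)) =
      (Measure.pi μ).withDensity fun x ↦ ENNReal.ofReal (∏ i, f i (x i)) := by
  refine Measure.pi_eq fun s hs ↦ ?_
  have hprod : Integrable (fun x ↦ ∏ i, f i (x i)) (Measure.pi fun i ↦ (μ i).restrict (s i)) :=
    .fintype_prod_dep fun i ↦ (hf i).restrict
  rw [withDensity_apply _ (.univ_pi hs), Measure.restrict_pi_pi,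
    ← ofReal_integral_eq_lintegral_ofReal hprod
      (.of_forall fun x ↦ Finset.prod_nonneg fun i _ ↦ hf₀ i (x i)),
    integral_fintype_prod_eq_prod, ENNReal.ofReal_prod_of_nonneg
      fun i _ ↦ integral_nonneg (hf₀ i)]
  refine Finset.prod_congr rfl fun i _ ↦ ?_
  rw [withDensity_apply _ (hs i),
    ofReal_integral_eq_lintegral_ofReal (hf i).restrict (.of_forall (hf₀ i))]

lemma withDensity_ofReal_absolutelyContinuous {p q : α → ℝ} (hq : Measurable q)
    (hq₀ : ∀ x, 0 < q x) :
    ν.withDensity (fun x ↦ ENNReal.ofReal (p x)) ≪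
      ν.withDensity fun x ↦ ENNReal.ofReal (q x) :=
  (withDensity_absolutelyContinuous ν _).trans <|
    withDensity_absolutelyContinuous' (by fun_prop) (.of_forall fun x ↦ by simpa using hq₀ x)

lemma llr_withDensity_ofReal [SigmaFinite ν] {p q : α → ℝ} (hp : Measurable p)
    (hp₀ : ∀ x, 0 < p x) (hq : Measurable q) (hq₀ : ∀ x, 0 < q x) :
    llr (ν.withDensity fun x ↦ ENNReal.ofReal (p x))
      (ν.withDensity fun x ↦ ENNReal.ofReal (q x)) =ᵐ[ν]
      fun x ↦ Real.log (p x) - Real.log (q x) := by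
  have := SigmaFinite.withDensity_ofReal (μ := ν) p
  filter_upwards [Measure.rnDeriv_withDensity_right
      (ν.withDensity fun x ↦ ENNReal.ofReal (p x)) ν (f := fun x ↦ ENNReal.ofReal (q x))
      (by fun_prop) (.of_forall fun x ↦ by simpa using hq₀ x) (.of_forall fun x ↦ by simp),
    Measure.rnDeriv_withDensity ν (f := fun x ↦ ENNReal.ofReal (p x)) (by fun_prop)]
    with x hright hleft
  rw [llr, hright, hleft, ENNReal.toReal_mul, ENNReal.toReal_inv,
    ENNReal.toReal_ofReal (hq₀ x).le, ENNReal.toReal_ofReal (hp₀ x).le,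
    Real.log_mul (inv_ne_zero (hq₀ x).ne') (hp₀ x).ne', Real.log_inv]
  ring

end Measure

section Moments

variable {Ω ι : Type*} {mΩ : MeasurableSpace Ω} {P : Measure Ω} [Fintype ι] {X : Ω → ι → ℝ}

lemma integrable_dotProduct_mulVec_sub [IsFiniteMeasure P]
    (hX : ∀ i, MemLp (fun ω ↦ X ω i) 2 P) (a : ι → ℝ) (M : Matrix ι ι ℝ) :
    Integrable (fun ω ↦ (X ω - a) ⬝ᵥ (M *ᵥ (X ω - a))) P := by
  have hsub (i : ι) : MemLp (fun ω ↦ X ω i - a i) 2 P := (hX i).sub (memLp_const (a i))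
  simp only [dotProduct, mulVec, Pi.sub_apply, Finset.mul_sum, mul_left_comm _ (M _ _)]
  exact integrable_finsetSum _ fun i _ ↦ integrable_finsetSum _ fun j _ ↦
    ((hsub i).integrable_mul (hsub j)).const_mul _

variable [IsProbabilityMeasure P]

lemma integral_sub_const_mul_sub_const {Y Z : Ω → ℝ} (hY : MemLp Y 2 P) (hZ : MemLp Z 2 P)
    (a b : ℝ) :
    ∫ ω, (Y ω - a) * (Z ω - b) ∂P = cov[Y, Z; P] + (P[Y] - a) * (P[Z] - b) := by
  have hY₁ : Integrable Y P := hY.integrable one_le_two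
  have hZ₁ : Integrable Z P := hZ.integrable one_le_two
  have hcov : cov[fun ω ↦ Y ω - a, fun ω ↦ Z ω - b; P] =
      ∫ ω, (Y ω - a) * (Z ω - b) ∂P - (∫ ω, (Y ω - a) ∂P) * ∫ ω, (Z ω - b) ∂P :=
    ProbabilityTheory.covariance_eq_sub (hY.sub (memLp_const a)) (hZ.sub (memLp_const b))
  rw [ProbabilityTheory.covariance_sub_const_left hY₁,
    ProbabilityTheory.covariance_sub_const_right hZ₁, integral_sub hY₁ (integrable_const a),
    integral_sub hZ₁ (integrable_const b)] at hcov
  simp only [integral_const, probReal_univ, one_smul] at hcov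
  linarith

lemma integral_dotProduct_mulVec_sub (hX : ∀ i, MemLp (fun ω ↦ X ω i) 2 P) {μ : ι → ℝ}
    (hμ : ∀ i, ∫ ω, X ω i ∂P = μ i) {S : Matrix ι ι ℝ}
    (hS : ∀ i j, cov[fun ω ↦ X ω i, fun ω ↦ X ω j; P] = S i j) (a : ι → ℝ) (M : Matrix ι ι ℝ) :
    ∫ ω, (X ω - a) ⬝ᵥ (M *ᵥ (X ω - a)) ∂P =
      (M * S).trace + (μ - a) ⬝ᵥ (M *ᵥ (μ - a)) := by
  have hsub (i : ι) : MemLp (fun ω ↦ X ω i - a i) 2 P := (hX i).sub (memLp_const (a i))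
  have hint (i j : ι) : Integrable (fun ω ↦ M i j * ((X ω i - a i) * (X ω j - a j))) P :=
    ((hsub i).integrable_mul (hsub j)).const_mul _
  have hentry (i j : ι) : ∫ ω, M i j * ((X ω i - a i) * (X ω j - a j)) ∂P =
      M i j * S j i + M i j * ((μ i - a i) * (μ j - a j)) := by
    rw [integral_const_mul, integral_sub_const_mul_sub_const (hX i) (hX j), hμ, hμ,
      ProbabilityTheory.covariance_comm, hS, mul_add]
  simp only [dotProduct, mulVec, Pi.sub_apply, Finset.mul_sum, mul_left_comm _ (M _ _),
    trace, diag, mul_apply]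
  rw [integral_finsetSum _ fun i _ ↦ integrable_finsetSum _ fun j _ ↦ hint i j,
    ← Finset.sum_add_distrib]
  refine Finset.sum_congr rfl fun i _ ↦ ?_
  rw [integral_finsetSum _ fun j _ ↦ hint i j, ← Finset.sum_add_distrib]
  exact Finset.sum_congr rfl fun j _ ↦ hentry i j

end Moments

section Gaussian

variable {N : ℕ}

/-- The Lebesgue density of the Gaussian `N(μ, S)` on `ℝᴺ`, so that `multivariateGaussian μ S` is
by definition the measure with this density. -/
noncomputable def multivariateGaussianPDFReal (μ : Fin N → ℝ) (S : Matrix (Fin N) (Fin N) ℝ)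
    (x : Fin N → ℝ) : ℝ :=
  (√((2 * Real.pi) ^ N * S.det))⁻¹ * Real.exp (-(1 / 2 : ℝ) * ((x - μ) ⬝ᵥ (S⁻¹ *ᵥ (x - μ))))

lemma multivariateGaussian_eq_withDensity (μ : Fin N → ℝ) (S : Matrix (Fin N) (Fin N) ℝ) :
    multivariateGaussian μ S =
      volume.withDensity fun x ↦ ENNReal.ofReal (multivariateGaussianPDFReal μ S x) :=
  rfl

lemma measurable_multivariateGaussianPDFReal (μ : Fin N → ℝ) (S : Matrix (Fin N) (Fin N) ℝ) :
    Measurable (multivariateGaussianPDFReal μ S) := by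
  unfold multivariateGaussianPDFReal dotProduct mulVec dotProduct
  fun_prop

lemma multivariateGaussianPDFReal_pos (μ : Fin N → ℝ) {S : Matrix (Fin N) (Fin N) ℝ}
    (hS : 0 < S.det) (x : Fin N → ℝ) : 0 < multivariateGaussianPDFReal μ S x := by
  unfold multivariateGaussianPDFReal
  positivity

lemma log_multivariateGaussianPDFReal (μ : Fin N → ℝ) {S : Matrix (Fin N) (Fin N) ℝ}
    (hS : 0 < S.det) (x : Fin N → ℝ) :
    Real.log (multivariateGaussianPDFReal μ S x) =
      -(1 / 2) * (N * Real.log (2 * Real.pi) + Real.log S.det + (x - μ) ⬝ᵥ (S⁻¹ *ᵥ (x - μ))) := by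
  have hsqrt : √((2 * Real.pi) ^ N * S.det) ≠ 0 := by positivity
  rw [multivariateGaussianPDFReal, Real.log_mul (inv_ne_zero hsqrt) (Real.exp_ne_zero _),
    Real.log_inv, Real.log_exp, Real.log_sqrt (by positivity),
    Real.log_mul (by positivity) hS.ne', Real.log_pow]
  ring

lemma multivariateGaussianPDFReal_affine (μ b : Fin N → ℝ) (S : Matrix (Fin N) (Fin N) ℝ)
    {A : Matrix (Fin N) (Fin N) ℝ} (hA : A.det ≠ 0) (x : Fin N → ℝ) :
    multivariateGaussianPDFReal (b + A *ᵥ μ) (A * S * Aᵀ) (b + A *ᵥ x) =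
      |A.det|⁻¹ * multivariateGaussianPDFReal μ S x := by
  have hdet : √((2 * Real.pi) ^ N * (A * S * Aᵀ).det) =
      |A.det| * √((2 * Real.pi) ^ N * S.det) := by
    rw [det_mul, det_mul, det_transpose, ← Real.sqrt_sq_eq_abs, ← Real.sqrt_mul (sq_nonneg _)]
    ring_nf
  have hcancel : A⁻¹ *ᵥ (A *ᵥ (x - μ)) = x - μ := by
    rw [mulVec_mulVec, nonsing_inv_mul _ hA.isUnit, one_mulVec]
  have hform : (A *ᵥ (x - μ)) ⬝ᵥ ((A * S * Aᵀ)⁻¹ *ᵥ (A *ᵥ (x - μ))) =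
      (x - μ) ⬝ᵥ (S⁻¹ *ᵥ (x - μ)) := by
    rw [Matrix.mul_inv_rev, Matrix.mul_inv_rev, ← mulVec_mulVec, ← mulVec_mulVec, hcancel,
      ← transpose_nonsing_inv, mulVec_transpose, dotProduct_comm, ← dotProduct_mulVec, hcancel,
      dotProduct_comm]
  rw [multivariateGaussianPDFReal, multivariateGaussianPDFReal, hdet, add_sub_add_left_eq_sub,
    ← mulVec_sub, hform, mul_inv, mul_assoc]

lemma map_const_add_mulVec_multivariateGaussian (μ b : Fin N → ℝ) (S : Matrix (Fin N) (Fin N) ℝ)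
    {A : Matrix (Fin N) (Fin N) ℝ} (hA : A.det ≠ 0) :
    (multivariateGaussian μ S).map (fun x ↦ b + A *ᵥ x) =
      multivariateGaussian (b + A *ᵥ μ) (A * S * Aᵀ) := by
  have hdet : 0 < |A.det| := abs_pos.2 hA
  have hφ : Measurable fun x ↦ b + A *ᵥ x := by
    unfold mulVec dotProduct
    fun_prop
  have hpdf : (fun x ↦ ENNReal.ofReal (multivariateGaussianPDFReal μ S x)) =
      ENNReal.ofReal |A.det| •
        ((fun y ↦ ENNReal.ofReal (multivariateGaussianPDFReal (b + A *ᵥ μ) (A * S * Aᵀ) y)) ∘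
          fun x ↦ b + A *ᵥ x) := by
    ext x
    simp only [Pi.smul_apply, Function.comp_apply, smul_eq_mul,
      multivariateGaussianPDFReal_affine μ b S hA]
    rw [← ENNReal.ofReal_mul hdet.le, mul_inv_cancel_left₀ hdet.ne']
  have hmeas := (measurable_multivariateGaussianPDFReal (b + A *ᵥ μ) (A * S * Aᵀ)).ennreal_ofReal
  rw [multivariateGaussian_eq_withDensity, hpdf, withDensity_smul _ (hmeas.comp hφ),
    Measure.map_smul, map_withDensity_comp hφ hmeas, volume_map_const_add_mulVec b hA,
    withDensity_smul_measure, smul_smul, ← ENNReal.ofReal_mul hdet.le,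
    mul_inv_cancel₀ hdet.ne', ENNReal.ofReal_one, one_smul, multivariateGaussian_eq_withDensity]

lemma multivariateGaussianPDFReal_zero_one (x : Fin N → ℝ) :
    multivariateGaussianPDFReal 0 1 x = ∏ i, gaussianPDFReal 0 1 (x i) := by
  have hsqrt : √((2 * Real.pi) ^ N) = √(2 * Real.pi) ^ N := by
    rw [Real.sqrt_eq_iff_eq_sq (by positivity) (by positivity), ← pow_mul, mul_comm N, pow_mul,
      Real.sq_sqrt (by positivity)]
  have hform : -(1 / 2 : ℝ) * (x ⬝ᵥ x) = ∑ i, -x i ^ 2 / 2 := by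
    rw [dotProduct, Finset.mul_sum]
    exact Finset.sum_congr rfl fun i _ ↦ by ring
  simp only [multivariateGaussianPDFReal, gaussianPDFReal, sub_zero, det_one, mul_one, inv_one,
    one_mulVec, NNReal.coe_one, hsqrt, hform, Real.exp_sum, Finset.prod_mul_distrib,
    Finset.prod_const, Finset.card_univ, Fintype.card_fin, inv_pow]

lemma multivariateGaussian_zero_one :
    multivariateGaussian (0 : Fin N → ℝ) 1 = Measure.pi fun _ ↦ gaussianReal 0 1 := by
  have hreal : gaussianReal 0 1 =
      volume.withDensity fun x ↦ ENNReal.ofReal (gaussianPDFReal 0 1 x) :=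
    ProbabilityTheory.gaussianReal_of_var_ne_zero 0 one_ne_zero
  rw [multivariateGaussian_eq_withDensity, hreal,
    pi_withDensity_ofReal (fun _ ↦ ProbabilityTheory.integrable_gaussianPDFReal 0 1)
      fun _ ↦ ProbabilityTheory.gaussianPDFReal_nonneg 0 1, ← volume_pi]
  simp only [multivariateGaussianPDFReal_zero_one]

lemma multivariateGaussian_eq_map_ofLp (μ : Fin N → ℝ) {S : Matrix (Fin N) (Fin N) ℝ}
    (hS : S.PosDef) :
    multivariateGaussian μ S = (ProbabilityTheory.multivariateGaussian (toLp 2 μ) S).map ofLp := by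
  have hsqrt : CFC.sqrt S * (CFC.sqrt S)ᵀ = S := by
    have hsymm : (CFC.sqrt S)ᵀ = CFC.sqrt S := (CFC.sqrt_nonneg S).isSelfAdjoint
    rw [hsymm, CFC.sqrt_mul_sqrt_self S hS.posSemidef.nonneg]
  have hdet : (CFC.sqrt S).det ≠ 0 := fun h ↦ hS.det_pos.ne' <| by
    rw [← hsqrt, det_mul, h, zero_mul]
  have hmap : (fun x ↦ μ + CFC.sqrt S *ᵥ x) =
      ofLp ∘ (fun x ↦ toLp 2 μ + toEuclideanCLM (𝕜 := ℝ) (CFC.sqrt S) x) ∘ toLp 2 := by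
    ext x
    simp
  rw [ProbabilityTheory.multivariateGaussian, ← ProbabilityTheory.map_pi_eq_stdGaussian,
    Measure.map_map (by fun_prop) (by fun_prop), Measure.map_map (by fun_prop) (by fun_prop),
    Function.comp_assoc, ← hmap, ← multivariateGaussian_zero_one,
    map_const_add_mulVec_multivariateGaussian 0 μ 1 hdet]
  simp [hsqrt]

lemma isProbabilityMeasure_multivariateGaussian (μ : Fin N → ℝ) {S : Matrix (Fin N) (Fin N) ℝ}
    (hS : S.PosDef) : IsProbabilityMeasure (multivariateGaussian μ S) := by
  rw [multivariateGaussian_eq_map_ofLp μ hS]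
  exact Measure.isProbabilityMeasure_map (by fun_prop)

lemma memLp_two_eval_multivariateGaussian (μ : Fin N → ℝ) {S : Matrix (Fin N) (Fin N) ℝ}
    (hS : S.PosDef) (i : Fin N) : MemLp (fun x ↦ x i) 2 (multivariateGaussian μ S) := by
  have hi : Measurable fun x : Fin N → ℝ ↦ x i := measurable_pi_apply i
  rw [multivariateGaussian_eq_map_ofLp μ hS,
    memLp_map_measure_iff hi.aestronglyMeasurable (by fun_prop)]
  exact (IsGaussian.memLp_two_id (μ := ProbabilityTheory.multivariateGaussian _ S)).eval_piLp i

lemma integral_eval_multivariateGaussian (μ : Fin N → ℝ) {S : Matrix (Fin N) (Fin N) ℝ}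
    (hS : S.PosDef) (i : Fin N) : ∫ x, x i ∂multivariateGaussian μ S = μ i := by
  have hi : Measurable fun x : Fin N → ℝ ↦ x i := measurable_pi_apply i
  have hint : Integrable id (ProbabilityTheory.multivariateGaussian (toLp 2 μ) S) :=
    IsGaussian.integrable_id
  rw [multivariateGaussian_eq_map_ofLp μ hS,
    integral_map (by fun_prop) hi.aestronglyMeasurable]
  exact (eval_integral_piLp (fun i ↦ hint.eval_piLp i) i).symm.trans <|
    congrArg (fun x : EuclideanSpace ℝ (Fin N) ↦ x i)
      ProbabilityTheory.integral_id_multivariateGaussian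

lemma covariance_eval_multivariateGaussian (μ : Fin N → ℝ) {S : Matrix (Fin N) (Fin N) ℝ}
    (hS : S.PosDef) (i j : Fin N) :
    cov[fun x ↦ x i, fun x ↦ x j; multivariateGaussian μ S] = S i j := by
  have hi : Measurable fun x : Fin N → ℝ ↦ x i := measurable_pi_apply i
  have hj : Measurable fun x : Fin N → ℝ ↦ x j := measurable_pi_apply j
  rw [multivariateGaussian_eq_map_ofLp μ hS,
    ProbabilityTheory.covariance_map
      hi.aestronglyMeasurable hj.aestronglyMeasurable
      (by fun_prop)]
  exact ProbabilityTheory.covariance_eval_multivariateGaussian hS.posSemidef i j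

lemma integrable_dotProduct_mulVec_sub_multivariateGaussian (μ : Fin N → ℝ)
    {S : Matrix (Fin N) (Fin N) ℝ} (hS : S.PosDef) (a : Fin N → ℝ) (M : Matrix (Fin N) (Fin N) ℝ) :
    Integrable (fun x ↦ (x - a) ⬝ᵥ (M *ᵥ (x - a))) (multivariateGaussian μ S) :=
  have := isProbabilityMeasure_multivariateGaussian μ hS
  integrable_dotProduct_mulVec_sub (memLp_two_eval_multivariateGaussian μ hS) a M

lemma integral_dotProduct_mulVec_sub_multivariateGaussian (μ : Fin N → ℝ)
    {S : Matrix (Fin N) (Fin N) ℝ} (hS : S.PosDef) (a : Fin N → ℝ) (M : Matrix (Fin N) (Fin N) ℝ) :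
    ∫ x, (x - a) ⬝ᵥ (M *ᵥ (x - a)) ∂multivariateGaussian μ S =
      (M * S).trace + (μ - a) ⬝ᵥ (M *ᵥ (μ - a)) :=
  have := isProbabilityMeasure_multivariateGaussian μ hS
  integral_dotProduct_mulVec_sub (memLp_two_eval_multivariateGaussian μ hS)
    (integral_eval_multivariateGaussian μ hS) (covariance_eval_multivariateGaussian μ hS) a M

/-- The closed form of the Kullback–Leibler divergence between the Gaussians with (mean, covariance)
pairs `p` and `q`, as a function of the parameters. -/
noncomputable def gaussianKL (p q : (Fin N → ℝ) × Matrix (Fin N) (Fin N) ℝ) : ℝ :=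
  1 / 2 * (Real.log q.2.det - Real.log p.2.det - N + (q.2⁻¹ * p.2).trace +
    (p.1 - q.1) ⬝ᵥ (q.2⁻¹ *ᵥ (p.1 - q.1)))

lemma multivariateGaussian_absolutelyContinuous (μ ν : Fin N → ℝ) (R : Matrix (Fin N) (Fin N) ℝ)
    {S : Matrix (Fin N) (Fin N) ℝ} (hS : 0 < S.det) :
    multivariateGaussian μ R ≪ multivariateGaussian ν S :=
  withDensity_ofReal_absolutelyContinuous (measurable_multivariateGaussianPDFReal ν S)
    (multivariateGaussianPDFReal_pos ν hS)

lemma llr_multivariateGaussian (μ ν : Fin N → ℝ) {R S : Matrix (Fin N) (Fin N) ℝ}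
    (hR : 0 < R.det) (hS : 0 < S.det) :
    llr (multivariateGaussian μ R) (multivariateGaussian ν S) =ᵐ[multivariateGaussian μ R]
      fun x ↦ 1 / 2 * (Real.log S.det - Real.log R.det + (x - ν) ⬝ᵥ (S⁻¹ *ᵥ (x - ν)) -
        (x - μ) ⬝ᵥ (R⁻¹ *ᵥ (x - μ))) := by
  have hac : multivariateGaussian μ R ≪ volume := withDensity_absolutelyContinuous _ _
  filter_upwards [hac.ae_le <| llr_withDensity_ofReal (measurable_multivariateGaussianPDFReal μ R)
    (multivariateGaussianPDFReal_pos μ hR) (measurable_multivariateGaussianPDFReal ν S)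
    (multivariateGaussianPDFReal_pos ν hS)] with x hx
  rw [multivariateGaussian_eq_withDensity, multivariateGaussian_eq_withDensity, hx,
    log_multivariateGaussianPDFReal μ hR, log_multivariateGaussianPDFReal ν hS]
  ring

lemma klDiv_multivariateGaussian {p q : (Fin N → ℝ) × Matrix (Fin N) (Fin N) ℝ}
    (hp : p.2.PosDef) (hq : q.2.PosDef) :
    klDiv (multivariateGaussian p.1 p.2) (multivariateGaussian q.1 q.2) =
      ENNReal.ofReal (gaussianKL p q) := by
  obtain ⟨μ, R⟩ := p
  obtain ⟨ν, S⟩ := q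
  dsimp only at hp hq ⊢
  have := isProbabilityMeasure_multivariateGaussian μ hp
  have hself : ∫ x, (x - μ) ⬝ᵥ (R⁻¹ *ᵥ (x - μ)) ∂multivariateGaussian μ R = N := by
    rw [integral_dotProduct_mulVec_sub_multivariateGaussian μ hp,
      nonsing_inv_mul _ hp.det_pos.ne'.isUnit, trace_one, sub_self, zero_dotProduct, add_zero,
      Fintype.card_fin]
  have hconst : Integrable (fun _ ↦ Real.log S.det - Real.log R.det) (multivariateGaussian μ R) :=
    integrable_const _
  have hint := integrable_dotProduct_mulVec_sub_multivariateGaussian μ hp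
  have hllr := llr_multivariateGaussian μ ν hp.det_pos hq.det_pos
  have hintegrable : Integrable (llr (multivariateGaussian μ R) (multivariateGaussian ν S))
      (multivariateGaussian μ R) :=
    (((hconst.add (hint ν S⁻¹)).sub (hint μ R⁻¹)).const_mul _).congr hllr.symm
  rw [klDiv, if_pos ⟨multivariateGaussian_absolutelyContinuous μ ν R hq.det_pos, hintegrable⟩,
    integral_congr_ae hllr, integral_const_mul,
    integral_sub (by exact hconst.add (hint ν S⁻¹)) (hint μ R⁻¹),
    integral_add hconst (hint ν S⁻¹), hself, integral_const, probReal_univ, one_smul,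
    integral_dotProduct_mulVec_sub_multivariateGaussian μ hp, gaussianKL]
  congr 1
  ring

lemma continuousOn_gaussianKL :
    ContinuousOn (Function.uncurry (gaussianKL (N := N)))
      ({p | p.2.det ≠ 0} ×ˢ {q | q.2.det ≠ 0}) := by
  have hinv : ContinuousOn (fun z : ((Fin N → ℝ) × Matrix (Fin N) (Fin N) ℝ) × (Fin N → ℝ) ×
      Matrix (Fin N) (Fin N) ℝ ↦ z.2.2⁻¹) ({p | p.2.det ≠ 0} ×ˢ {q | q.2.det ≠ 0}) :=
    continuousOn_matrix_inv.comp (by fun_prop) fun z hz ↦ hz.2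
  have hpoly : Continuous fun w : (((Fin N → ℝ) × Matrix (Fin N) (Fin N) ℝ) × (Fin N → ℝ) ×
      Matrix (Fin N) (Fin N) ℝ) × Matrix (Fin N) (Fin N) ℝ ↦
      (w.2 * w.1.1.2).trace + (w.1.1.1 - w.1.2.1) ⬝ᵥ (w.2 *ᵥ (w.1.1.1 - w.1.2.1)) := by
    fun_prop
  have hpolyinv := hpoly.comp_continuousOn (continuousOn_id.prodMk hinv)
  unfold Function.uncurry gaussianKL
  simp only [add_assoc]
  refine (((ContinuousOn.log (by fun_prop) fun z hz ↦ hz.2).sub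
    (ContinuousOn.log (by fun_prop) fun z hz ↦ hz.1)).sub continuousOn_const).add hpolyinv
    |>.const_mul _

lemma exists_forall_klDiv_multivariateGaussian_le {𝒦 : Set ((Fin N → ℝ) × Matrix (Fin N) (Fin N) ℝ)}
    (h𝒦 : IsCompact 𝒦) (hpos : ∀ p ∈ 𝒦, p.2.PosDef) :
    ∃ C : ℝ, ∀ p ∈ 𝒦, ∀ q ∈ 𝒦,
      klDiv (multivariateGaussian p.1 p.2) (multivariateGaussian q.1 q.2) ≤ ENNReal.ofReal C := by
  have hdet : 𝒦 ⊆ {p | p.2.det ≠ 0} := fun p hp ↦ (hpos p hp).det_pos.ne'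
  obtain ⟨C, hC⟩ := (h𝒦.prod h𝒦).bddAbove_image
    (continuousOn_gaussianKL.mono (prod_mono hdet hdet))
  refine ⟨C, fun p hp q hq ↦ ?_⟩
  rw [klDiv_multivariateGaussian (hpos p hp) (hpos q hq)]
  exact ENNReal.ofReal_le_ofReal (hC ⟨(p, q), ⟨hp, hq⟩, rfl⟩)

end Gaussian

section Robustness

lemma abs_mul_inv_one_add_sq_le_one (z : ℝ) : |z| * (1 + z ^ 2)⁻¹ ≤ 1 := by
  rw [← div_eq_mul_inv, div_le_one (by positivity)]
  nlinarith [sq_abs z, sq_nonneg (|z| - 1)]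

lemma abs_neg_two_mul_div_sq_add_sq_le (u : ℝ) {c : ℝ} (hc : c ≠ 0) :
    |-2 * u / (c ^ 2 + u ^ 2)| ≤ |c|⁻¹ := by
  have hpos : 0 < c ^ 2 + u ^ 2 := by positivity
  rw [abs_div, abs_mul, abs_of_pos hpos, abs_neg, abs_two, ← one_div,
    div_le_div_iff₀ hpos (abs_pos.2 hc)]
  nlinarith [sq_abs c, sq_abs u, sq_nonneg (|c| - |u|)]

variable {N T : ℕ} {𝕂 : Matrix (Fin N × Fin T) (Fin N × Fin T) ℝ} {m : Fin N × Fin T → ℝ}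
  {σ β : Fin T → ℝ} {γ c : Fin N → Fin T → (Fin T → ℝ) → ℝ} {Y : Fin N → Fin T → ℝ}

/-- The diagonal of `(𝚺J(Y))⁻¹`, the precision that the MO-RCGP attributes to each observation. -/
noncomputable def noisePrecision (σ β : Fin T → ℝ) (γ c : Fin N → Fin T → (Fin T → ℝ) → ℝ)
    (Y : Fin N → Fin T → ℝ) (p : Fin N × Fin T) : ℝ :=
  2 * imqWeight β γ c Y p.1 p.2 ^ 2 / σ p.2 ^ 4

/-- The information vector `(𝚺J(Y))⁻¹(y(Y) − m_W(Y))` contributed by the observations. -/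
noncomputable def weightedResidual (m : Fin N × Fin T → ℝ) (σ β : Fin T → ℝ)
    (γ c : Fin N → Fin T → (Fin T → ℝ) → ℝ) (Y : Fin N → Fin T → ℝ) (p : Fin N × Fin T) : ℝ :=
  noisePrecision σ β γ c Y p * (Y p.1 p.2 - shiftedMean m σ γ c Y p)

lemma noisePrecision_eq (p : Fin N × Fin T) :
    noisePrecision σ β γ c Y p = 2 * β p.2 ^ 2 / σ p.2 ^ 4 *
      (1 + ((Y p.1 p.2 - γ p.1 p.2 (Y p.1)) / c p.1 p.2 (Y p.1)) ^ 2)⁻¹ := by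
  rw [noisePrecision, imqWeight, mul_pow, inv_pow, Real.sq_sqrt (by positivity)]
  ring

lemma noisePrecision_nonneg (p : Fin N × Fin T) : 0 ≤ noisePrecision σ β γ c Y p := by
  unfold noisePrecision
  positivity

lemma noisePrecision_pos (hσ : ∀ t, 0 < σ t) (hβ : ∀ t, 0 < β t) (p : Fin N × Fin T) :
    0 < noisePrecision σ β γ c Y p := by
  have := hσ p.2
  have := hβ p.2
  rw [noisePrecision_eq]
  positivity

lemma noisePrecision_le (p : Fin N × Fin T) :
    noisePrecision σ β γ c Y p ≤ 2 * β p.2 ^ 2 / σ p.2 ^ 4 := by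
  rw [noisePrecision_eq]
  exact mul_le_of_le_one_right (by positivity)
    (inv_le_one_of_one_le₀ (le_add_of_nonneg_right (sq_nonneg _)))

lemma noisePrecision_mul_abs_sub_le (p : Fin N × Fin T) (hc : c p.1 p.2 (Y p.1) ≠ 0) :
    noisePrecision σ β γ c Y p * |Y p.1 p.2 - γ p.1 p.2 (Y p.1)| ≤
      2 * β p.2 ^ 2 / σ p.2 ^ 4 * |c p.1 p.2 (Y p.1)| := by
  set z := (Y p.1 p.2 - γ p.1 p.2 (Y p.1)) / c p.1 p.2 (Y p.1) with hz
  have hz_mul : |Y p.1 p.2 - γ p.1 p.2 (Y p.1)| = |z| * |c p.1 p.2 (Y p.1)| := by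
    rw [← abs_mul, hz, div_mul_cancel₀ _ hc]
  calc noisePrecision σ β γ c Y p * |Y p.1 p.2 - γ p.1 p.2 (Y p.1)|
      = 2 * β p.2 ^ 2 / σ p.2 ^ 4 * (|z| * (1 + z ^ 2)⁻¹) * |c p.1 p.2 (Y p.1)| := by
        rw [noisePrecision_eq, hz_mul]
        ring
    _ ≤ 2 * β p.2 ^ 2 / σ p.2 ^ 4 * 1 * |c p.1 p.2 (Y p.1)| := by
        gcongr
        exact abs_mul_inv_one_add_sq_le_one z
    _ = _ := by rw [mul_one]

lemma abs_shiftedMean_sub_le (p : Fin N × Fin T) (hc : c p.1 p.2 (Y p.1) ≠ 0) :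
    |shiftedMean m σ γ c Y p - m p| ≤ σ p.2 ^ 2 / |c p.1 p.2 (Y p.1)| := by
  rw [shiftedMean, add_sub_cancel_left, abs_mul, abs_of_nonneg (sq_nonneg _), div_eq_mul_inv]
  exact mul_le_mul_of_nonneg_left (abs_neg_two_mul_div_sq_add_sq_le _ hc) (sq_nonneg _)

lemma abs_weightedResidual_le {Γ cmin cmax : ℝ} (p : Fin N × Fin T)
    (hΓ : |γ p.1 p.2 (Y p.1)| ≤ Γ) (hcmin : 0 < cmin)
    (hc : cmin ≤ |c p.1 p.2 (Y p.1)| ∧ |c p.1 p.2 (Y p.1)| ≤ cmax) :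
    |weightedResidual m σ β γ c Y p| ≤
      2 * β p.2 ^ 2 / σ p.2 ^ 4 * (cmax + (Γ + |m p| + σ p.2 ^ 2 / cmin)) := by
  have hc₀ : c p.1 p.2 (Y p.1) ≠ 0 := abs_pos.1 (hcmin.trans_le hc.1)
  have he : 0 ≤ noisePrecision σ β γ c Y p := noisePrecision_nonneg p
  have hshift : |shiftedMean m σ γ c Y p - m p| ≤ σ p.2 ^ 2 / cmin :=
    (abs_shiftedMean_sub_le p hc₀).trans (by gcongr; exact hc.1)
  have hresidual : |Y p.1 p.2 - shiftedMean m σ γ c Y p| ≤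
      |Y p.1 p.2 - γ p.1 p.2 (Y p.1)| + (Γ + |m p| + σ p.2 ^ 2 / cmin) := by
    have htriangle := abs_add_three (Y p.1 p.2 - γ p.1 p.2 (Y p.1)) (γ p.1 p.2 (Y p.1) - m p)
      (m p - shiftedMean m σ γ c Y p)
    have hprior := abs_sub (γ p.1 p.2 (Y p.1)) (m p)
    rw [abs_sub_comm] at hshift
    simp only [sub_add_sub_cancel] at htriangle
    linarith
  calc |weightedResidual m σ β γ c Y p|
      = noisePrecision σ β γ c Y p * |Y p.1 p.2 - shiftedMean m σ γ c Y p| := by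
        rw [weightedResidual, abs_mul, abs_of_nonneg he]
    _ ≤ noisePrecision σ β γ c Y p * |Y p.1 p.2 - γ p.1 p.2 (Y p.1)| +
          noisePrecision σ β γ c Y p * (Γ + |m p| + σ p.2 ^ 2 / cmin) := by
        rw [← mul_add]
        gcongr
    _ ≤ 2 * β p.2 ^ 2 / σ p.2 ^ 4 * cmax +
          2 * β p.2 ^ 2 / σ p.2 ^ 4 * (Γ + |m p| + σ p.2 ^ 2 / cmin) := by
        have := (abs_nonneg _).trans hΓ
        refine add_le_add ((noisePrecision_mul_abs_sub_le p hc₀).trans ?_) ?_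
        · gcongr
          exact hc.2
        · gcongr
          exact noisePrecision_le p
    _ = _ := (mul_add _ _ _).symm

lemma noiseMat_mul_Jmat : noiseMat σ * Jmat σ β γ c Y = diagonal (noisePrecision σ β γ c Y)⁻¹ := by
  rw [noiseMat, Jmat, diagonal_mul_diagonal]
  congr 1
  ext p
  rw [Pi.inv_apply, noisePrecision, inv_div]
  ring

lemma postCov_eq (h𝕂 : 𝕂.PosDef) (hσ : ∀ t, 0 < σ t) (hβ : ∀ t, 0 < β t) :
    postCov 𝕂 σ β γ c Y = (𝕂⁻¹ + diagonal (noisePrecision σ β γ c Y))⁻¹ := by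
  have hprec (p) : noisePrecision σ β γ c Y p ≠ 0 := (noisePrecision_pos hσ hβ p).ne'
  have hnoise : IsUnit (noiseMat σ * Jmat σ β γ c Y) := by
    rw [noiseMat_mul_Jmat, isUnit_diagonal, Pi.isUnit_iff]
    exact fun p ↦ (inv_ne_zero (hprec p)).isUnit
  have hinv : (noiseMat σ * Jmat σ β γ c Y)⁻¹ = diagonal (noisePrecision σ β γ c Y) := by
    refine Matrix.inv_eq_left_inv ?_
    rw [noiseMat_mul_Jmat, diagonal_mul_diagonal, ← diagonal_one]
    exact congrArg diagonal (funext fun p ↦ mul_inv_cancel₀ (hprec p))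
  rw [postCov, mul_inv_add_mul_eq_inv_add_inv h𝕂.isUnit hnoise, hinv]

lemma postMean_eq (h𝕂 : 𝕂.PosDef) (hσ : ∀ t, 0 < σ t) (hβ : ∀ t, 0 < β t) :
    postMean 𝕂 m σ β γ c Y = m + (𝕂⁻¹ + diagonal (noisePrecision σ β γ c Y))⁻¹ *ᵥ
      weightedResidual m σ β γ c Y := by
  have hresidual : (fun p ↦ Y p.1 p.2 - shiftedMean m σ γ c Y p) =
      (noiseMat σ * Jmat σ β γ c Y) *ᵥ weightedResidual m σ β γ c Y := by
    ext p
    rw [noiseMat_mul_Jmat, mulVec_diagonal, Pi.inv_apply, weightedResidual,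
      inv_mul_cancel_left₀ (noisePrecision_pos hσ hβ p).ne']
  rw [← postCov_eq h𝕂 hσ hβ, postMean, hresidual, mulVec_mulVec, postCov]

/-- Mean and covariance of the channel-`t` marginal of the Gaussian that updates the prior
`N(m, 𝕂)` by the diagonal precision `z.1` and the information vector `z.2`. -/
noncomputable def channelMoments (𝕂 : Matrix (Fin N × Fin T) (Fin N × Fin T) ℝ)
    (m : Fin N × Fin T → ℝ) (t : Fin T) (z : (Fin N × Fin T → ℝ) × (Fin N × Fin T → ℝ)) :
    (Fin N → ℝ) × Matrix (Fin N) (Fin N) ℝ :=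
  (fun i ↦ (m + (𝕂⁻¹ + diagonal z.1)⁻¹ *ᵥ z.2) (i, t),
    (𝕂⁻¹ + diagonal z.1)⁻¹.submatrix (·, t) (·, t))

lemma continuousOn_channelMoments (h𝕂 : 𝕂.PosDef) (t : Fin T) :
    ContinuousOn (channelMoments 𝕂 m t) (Ici 0 ×ˢ univ) := by
  have hinv : ContinuousOn (fun z : (Fin N × Fin T → ℝ) × (Fin N × Fin T → ℝ) ↦
      (𝕂⁻¹ + diagonal z.1)⁻¹) (Ici 0 ×ˢ univ) :=
    (continuousOn_inv_add_diagonal_inv h𝕂).comp continuousOn_fst (mapsTo_fst_prod)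
  have hmoments : Continuous fun w : ((Fin N × Fin T → ℝ) × (Fin N × Fin T → ℝ)) ×
      Matrix (Fin N × Fin T) (Fin N × Fin T) ℝ ↦
      ((fun i ↦ (m + w.2 *ᵥ w.1.2) (i, t), w.2.submatrix (·, t) (·, t)) :
        (Fin N → ℝ) × Matrix (Fin N) (Fin N) ℝ) := by
    fun_prop
  exact (hmoments.comp_continuousOn (continuousOn_id.prodMk hinv) :)

lemma posDef_channelMoments (h𝕂 : 𝕂.PosDef) (t : Fin T)
    {z : (Fin N × Fin T → ℝ) × (Fin N × Fin T → ℝ)} (hz : 0 ≤ z.1) :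
    (channelMoments 𝕂 m t z).2.PosDef :=
  (posDef_inv_add_diagonal_inv h𝕂 hz).submatrix (Prod.mk_left_injective t)

lemma channelMoments_posterior (h𝕂 : 𝕂.PosDef) (hσ : ∀ t, 0 < σ t) (hβ : ∀ t, 0 < β t)
    (t : Fin T) :
    channelMoments 𝕂 m t (noisePrecision σ β γ c Y, weightedResidual m σ β γ c Y) =
      (margMean 𝕂 m σ β γ c Y t, margCov 𝕂 σ β γ c Y t) := by
  rw [channelMoments, ← postMean_eq h𝕂 hσ hβ, ← postCov_eq h𝕂 hσ hβ]
  rfl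

lemma isCompact_iUnion_image_channelMoments (h𝕂 : 𝕂.PosDef)
    {B : Set ((Fin N × Fin T → ℝ) × (Fin N × Fin T → ℝ))} (hB : IsCompact B)
    (hB₀ : B ⊆ Ici 0 ×ˢ univ) : IsCompact (⋃ t, channelMoments 𝕂 m t '' B) :=
  isCompact_iUnion fun t ↦ hB.image_of_continuousOn ((continuousOn_channelMoments h𝕂 t).mono hB₀)

lemma exists_isCompact_noisePrecision_weightedResidual_mem {Γ : ℝ}
    (hΓ : ∀ i t v, |γ i t v| ≤ Γ) {cmin cmax : ℝ} (hcmin : 0 < cmin)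
    (hc : ∀ i t v, cmin ≤ |c i t v| ∧ |c i t v| ≤ cmax) :
    ∃ B : Set ((Fin N × Fin T → ℝ) × (Fin N × Fin T → ℝ)), IsCompact B ∧ B ⊆ Ici 0 ×ˢ univ ∧
      ∀ Y, (noisePrecision σ β γ c Y, weightedResidual m σ β γ c Y) ∈ B := by
  let κ (p : Fin N × Fin T) : ℝ := 2 * β p.2 ^ 2 / σ p.2 ^ 4
  let G (p : Fin N × Fin T) : ℝ := κ p * (cmax + (Γ + |m p| + σ p.2 ^ 2 / cmin))
  refine ⟨Icc 0 κ ×ˢ Icc (-G) G, isCompact_Icc.prod isCompact_Icc,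
    prod_mono Icc_subset_Ici_self (subset_univ _), fun Y ↦ ?_⟩
  have hG (p) : |weightedResidual m σ β γ c Y p| ≤ G p :=
    abs_weightedResidual_le p (hΓ _ _ _) hcmin (hc _ _ _)
  exact ⟨⟨noisePrecision_nonneg, noisePrecision_le⟩,
    fun p ↦ (abs_le.1 (hG p)).1, fun p ↦ (abs_le.1 (hG p)).2⟩

theorem mo_rcgp_robustness_general
    (h𝕂 : 𝕂.PosDef) (hσ : ∀ t, 0 < σ t) (hβ : ∀ t, 0 < β t)
    {Γ : ℝ} (hΓ : ∀ i t v, |γ i t v| ≤ Γ) {cmin cmax : ℝ} (hcmin : 0 < cmin)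
    (hc : ∀ i t v, cmin ≤ |c i t v| ∧ |c i t v| ≤ cmax) :
    (∀ Y, (postCov 𝕂 σ β γ c Y).PosDef) ∧ (∀ Y t, (margCov 𝕂 σ β γ c Y t).PosDef) ∧
    ∃ C : ℝ, ∀ t Y Y',
      klDiv
          (multivariateGaussian (margMean 𝕂 m σ β γ c Y t) (margCov 𝕂 σ β γ c Y t))
          (multivariateGaussian (margMean 𝕂 m σ β γ c Y' t) (margCov 𝕂 σ β γ c Y' t))
        ≤ ENNReal.ofReal C := by
  obtain ⟨B, hB, hB₀, hmem⟩ := exists_isCompact_noisePrecision_weightedResidual_mem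
    (m := m) (σ := σ) (β := β) hΓ hcmin hc
  have hpos : ∀ p ∈ ⋃ t, channelMoments 𝕂 m t '' B, p.2.PosDef := by
    simp only [mem_iUnion]
    rintro _ ⟨t, z, hz, rfl⟩
    exact posDef_channelMoments h𝕂 t (hB₀ hz).1
  have hmarg (t Y) : (margMean 𝕂 m σ β γ c Y t, margCov 𝕂 σ β γ c Y t) ∈
      ⋃ t, channelMoments 𝕂 m t '' B :=
    mem_iUnion.2 ⟨t, _, hmem Y, channelMoments_posterior h𝕂 hσ hβ t⟩
  obtain ⟨C, hC⟩ := exists_forall_klDiv_multivariateGaussian_le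
    (isCompact_iUnion_image_channelMoments h𝕂 hB hB₀) hpos
  refine ⟨fun Y ↦ ?_, fun Y t ↦ (hpos _ (hmarg t Y) :), C, fun t Y Y' ↦
    (hC _ (hmarg t Y) _ (hmarg t Y') :)⟩
  rw [postCov_eq h𝕂 hσ hβ]
  exact posDef_inv_add_diagonal_inv h𝕂 (hB₀ (hmem Y)).1

end Robustness

/-- Robustness of the MO-RCGP: the posterior covariance and all its channel
marginal covariances are symmetric positive definite, and the posterior influence
function of an arbitrarily large contamination `yᶜ` of the single entry `(m₀, s)`
of the observation matrix is uniformly bounded across all channels `t` by a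
constant `C` independent of `yᶜ`. -/
theorem mo_rcgp_robustness
    (N T : ℕ) (hN : 0 < N) (hT : 0 < T)
    (𝕂 : Matrix (Fin N × Fin T) (Fin N × Fin T) ℝ) (h𝕂 : 𝕂.PosDef)
    (m : Fin N × Fin T → ℝ)
    (σ : Fin T → ℝ) (hσ : ∀ t, 0 < σ t)
    (β : Fin T → ℝ) (hβ : ∀ t, 0 < β t)
    (γ c : Fin N → Fin T → (Fin T → ℝ) → ℝ)
    (hγind : ∀ i t v x, γ i t (Function.update v t x) = γ i t v)
    (hcind : ∀ i t v x, c i t (Function.update v t x) = c i t v)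
    (Γ : ℝ) (hΓ : ∀ i t v, |γ i t v| ≤ Γ)
    (cmin cmax : ℝ) (hcmin : 0 < cmin)
    (hc : ∀ i t v, cmin ≤ |c i t v| ∧ |c i t v| ≤ cmax)
    (Y : Fin N → Fin T → ℝ) (m₀ : Fin N) (s : Fin T) :
    (∀ Y' : Fin N → Fin T → ℝ, (postCov 𝕂 σ β γ c Y').PosDef) ∧
    (∀ (Y' : Fin N → Fin T → ℝ) (t : Fin T), (margCov 𝕂 σ β γ c Y' t).PosDef) ∧
    ∃ C : ℝ, ∀ (t : Fin T) (yc : ℝ),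
      klDiv
          (multivariateGaussian (margMean 𝕂 m σ β γ c Y t) (margCov 𝕂 σ β γ c Y t))
          (multivariateGaussian
            (margMean 𝕂 m σ β γ c (Function.update Y m₀ (Function.update (Y m₀) s yc)) t)
            (margCov 𝕂 σ β γ c (Function.update Y m₀ (Function.update (Y m₀) s yc)) t))
        ≤ ENNReal.ofReal C := by
  obtain ⟨hcov, hmarg, C, hC⟩ := mo_rcgp_robustness_general (m := m) h𝕂 hσ hβ hΓ hcmin hc
  exact ⟨hcov, hmarg, C, fun t yc ↦ hC t Y _⟩
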